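/- Let α ∈ (0,1], let u be a classical solution of the localized fractional heat equation, let x₀ ∈ ℝ^n with |x₀| = 1 and t₀ ∈ [−1,0], and let C₀ ≥ 0. Assume |u(t,x,y) − u(t₀,x₀,0)| ≤ C₀ (|x−x₀|² + y^{1−a} + (t₀−t))^α for all (t,x,y) ∈ ({−1} × closure(B_1^+)) ∪ ([−1,t₀] × closure((∂B_1)^+)). Then there is a constant C, depending only on α, n and a (but not on t₀), such that |u(t,x,y) − u(t₀,x₀,0)| ≤ C C₀ (|x−x₀|² + y^{1−a} + (t₀−t))^{sα/2} for all (t,x,y) ∈ [−1,t₀] × closure(B_1^+). -/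

import Mathlib

open Set Filter Topology MeasureTheory
open scoped RealInnerProductSpace

noncomputable section

abbrev En (n : ℕ) := EuclideanSpace ℝ (Fin n)

/-- The open upper half ball `B_r^+`. -/
def halfBall (n : ℕ) (r : ℝ) : Set (En n × ℝ) :=
  {p | ‖p.1‖ ^ 2 + p.2 ^ 2 < r ^ 2 ∧ 0 < p.2}

/-- The closure of the upper half ball. -/
def closedHalfBall (n : ℕ) (r : ℝ) : Set (En n × ℝ) :=
  {p | ‖p.1‖ ^ 2 + p.2 ^ 2 ≤ r ^ 2 ∧ 0 ≤ p.2}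

/-- `B_r^+ ∪ B_r^0`. -/
def halfBallWithBase (n : ℕ) (r : ℝ) : Set (En n × ℝ) :=
  {p | ‖p.1‖ ^ 2 + p.2 ^ 2 < r ^ 2 ∧ 0 ≤ p.2}

/-- The flat ball `B_r^0` in `ℝⁿ`. -/
def flatBall (n : ℕ) (r : ℝ) : Set (En n) := {x | ‖x‖ < r}

/-- `(∂B_1)^+`. -/
def spherePlus (n : ℕ) : Set (En n × ℝ) := {p | ‖p.1‖ ^ 2 + p.2 ^ 2 = 1 ∧ 0 < p.2}

/-- closure of `(∂B_1)^+`. -/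
def closedSpherePlus (n : ℕ) : Set (En n × ℝ) := {p | ‖p.1‖ ^ 2 + p.2 ^ 2 = 1 ∧ 0 ≤ p.2}

/-- Second directional derivative of `u` at `p` in direction `v`. -/
def D2 {n : ℕ} (u : En n × ℝ → ℝ) (p v : En n × ℝ) : ℝ :=
  fderiv ℝ (fun q => fderiv ℝ u q v) p v

/-- The Laplacian in the `n+1` variables `(x, y)`. -/
def lap {n : ℕ} (u : En n × ℝ → ℝ) (p : En n × ℝ) : ℝ :=
  (∑ i : Fin n, D2 u p (EuclideanSpace.single i 1, 0)) + D2 u p (0, 1)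

/-- `u` is `a`-harmonic on `Ω`: it is `C²` there and `Δu + (a/y) ∂_y u = 0`. -/
def IsAHarmonicOn {n : ℕ} (a : ℝ) (u : En n × ℝ → ℝ) (Ω : Set (En n × ℝ)) : Prop :=
  ContDiffOn ℝ 2 u Ω ∧ ∀ p ∈ Ω, lap u p + (a / p.2) * fderiv ℝ u p (0, 1) = 0

/-- `lim_{y → 0⁺} y^a ∂_y w(x, y) = L`. -/
def NormalDerivLimit {n : ℕ} (a : ℝ) (w : En n × ℝ → ℝ) (x : En n) (L : ℝ) : Prop :=
  Tendsto (fun y : ℝ => y ^ a * fderiv ℝ w (x, y) (0, 1)) (𝓝[>] (0 : ℝ)) (𝓝 L)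

/-- The boundary-restriction `(t, x) ↦ u(t, x, 0)`. -/
def bdryFun {n : ℕ} (u : ℝ → En n × ℝ → ℝ) : ℝ × En n → ℝ := fun q => u q.1 (q.2, 0)

/-- A classical solution of the extended drift–diffusion equation on
`[-1,0] × closure (B_1^+)` with drift `b` and right-hand side `f`. -/
def IsExtDDSolution {n : ℕ} (a : ℝ) (b : ℝ → En n → En n) (f : ℝ → En n → ℝ)
    (u : ℝ → En n × ℝ → ℝ) : Prop :=
  ContinuousOn (fun q : ℝ × (En n × ℝ) => u q.1 q.2) (Icc (-1 : ℝ) 0 ×ˢ closedHalfBall n 1) ∧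
  (∀ t ∈ Icc (-1 : ℝ) 0, IsAHarmonicOn a (u t) (halfBall n 1)) ∧
  (∀ q ∈ Ioc (-1 : ℝ) 0 ×ˢ flatBall n 1,
      DifferentiableWithinAt ℝ (bdryFun u) (Ioc (-1 : ℝ) 0 ×ˢ flatBall n 1) q) ∧
  (∀ t x, (t, x) ∈ Ioc (-1 : ℝ) 0 ×ˢ flatBall n 1 →
      ∃ L : ℝ, NormalDerivLimit a (u t) x L ∧
        fderivWithin ℝ (bdryFun u) (Ioc (-1 : ℝ) 0 ×ˢ flatBall n 1) (t, x) (1, 0) +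
          fderivWithin ℝ (bdryFun u) (Ioc (-1 : ℝ) 0 ×ˢ flatBall n 1) (t, x) (0, b t x) -
          L = f t x)

/-- A classical solution of the localized fractional heat equation on
`[-1,0] × closure (B_1^+)`. -/
def IsFracHeatSolution {n : ℕ} (a : ℝ) (u : ℝ → En n × ℝ → ℝ) : Prop :=
  ContinuousOn (fun q : ℝ × (En n × ℝ) => u q.1 q.2) (Icc (-1 : ℝ) 0 ×ˢ closedHalfBall n 1) ∧
  (∀ t ∈ Icc (-1 : ℝ) 0, IsAHarmonicOn a (u t) (halfBall n 1)) ∧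
  (∀ t ∈ Ioc (-1 : ℝ) 0, ∀ x ∈ flatBall n 1,
      DifferentiableWithinAt ℝ (fun τ => u τ (x, 0)) (Ioc (-1 : ℝ) 0) t ∧
      NormalDerivLimit a (u t) x (derivWithin (fun τ => u τ (x, 0)) (Ioc (-1 : ℝ) 0) t))


lemma fhe_tangent {x ε α : ℝ} (hx : 0 ≤ x) (hε : 0 < ε) (h0 : 0 < α) (h1 : α ≤ 1) :
    x ^ α ≤ ε ^ α + α * ε ^ (α - 1) * x := by
  have hb := rpow_one_add_le_one_add_mul_self (s := x / ε - 1) (p := α)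
    (by have : 0 ≤ x / ε := by positivity
        linarith) h0.le h1
  have e1 : 1 + (x / ε - 1) = x / ε := by ring
  rw [e1, Real.div_rpow hx hε.le] at hb
  have hp : 0 < ε ^ α := Real.rpow_pos_of_pos hε α
  rw [div_le_iff₀ hp] at hb
  rw [Real.rpow_sub_one hε.ne']
  have e2 : (1 + α * (x / ε - 1)) * ε ^ α = ε ^ α + α * (ε ^ α / ε) * x - α * ε ^ α := by
    field_simp
    ring
  have : 0 < α * ε ^ α := by positivity
  linarith

lemma fhe_isOpen (n : ℕ) : IsOpen (halfBall n 1) := by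
  have h1 : IsOpen {p : En n × ℝ | ‖p.1‖ ^ 2 + p.2 ^ 2 < 1 ^ 2} :=
    isOpen_lt (by fun_prop) (by fun_prop)
  have h2 : IsOpen {p : En n × ℝ | 0 < p.2} := isOpen_lt (by fun_prop) (by fun_prop)
  exact h1.inter h2

lemma fhe_isCompact (n : ℕ) : IsCompact (closedHalfBall n 1) := by
  have hc : IsClosed (closedHalfBall n 1) := by
    have h1 : IsClosed {p : En n × ℝ | ‖p.1‖ ^ 2 + p.2 ^ 2 ≤ 1 ^ 2} :=
      isClosed_le (by fun_prop) (by fun_prop)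
    have h2 : IsClosed {p : En n × ℝ | 0 ≤ p.2} := isClosed_le (by fun_prop) (by fun_prop)
    exact h1.inter h2
  refine ((isCompact_closedBall (0 : En n) 1).prod (isCompact_Icc (a := (0:ℝ)) (b := 1))).of_isClosed_subset
    hc ?_
  rintro ⟨x, y⟩ ⟨h1, h2⟩
  simp only at h1 h2
  refine ⟨?_, h2, ?_⟩
  · simp only [Metric.mem_closedBall, dist_zero_right]
    nlinarith [sq_nonneg y, norm_nonneg x]
  · simp only
    nlinarith [sq_nonneg ‖x‖]

/-- second order necessary condition -/
lemma fhe_second {f : ℝ → ℝ} (h : IsLocalMax f 0) (hc : ContinuousAt f 0) :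
    deriv (deriv f) 0 ≤ 0 := by
  by_contra hpos
  push Not at hpos
  have hmin := isLocalMin_of_deriv_deriv_pos hpos h.deriv_eq_zero hc
  have heq : f =ᶠ[𝓝 0] fun _ => f 0 := by
    filter_upwards [h, hmin] with x h1 h2
    exact le_antisymm h1 h2
  have := heq.deriv.deriv_eq
  simp at this
  linarith

lemma fhe_line {n : ℕ} {v : En n × ℝ → ℝ} {p w : En n × ℝ} (hv : ContDiffAt ℝ 2 v p) :
    (∀ᶠ r : ℝ in 𝓝 0, HasDerivAt (fun r : ℝ => v (p + r • w)) (fderiv ℝ v (p + r • w) w) r) ∧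
    HasDerivAt (fun r : ℝ => fderiv ℝ v (p + r • w) w) (D2 v p w) 0 := by
  have hl : ∀ r : ℝ, HasDerivAt (fun r : ℝ => p + r • w) w r := fun r => by
    simpa using ((hasDerivAt_id r).smul_const w).const_add p
  have ht : Tendsto (fun r : ℝ => p + r • w) (𝓝 0) (𝓝 p) := by
    have := (hl 0).continuousAt.tendsto
    simpa using this
  constructor
  · have hev : ∀ᶠ q in 𝓝 p, ContDiffAt ℝ 2 v q := hv.eventually (by simp)
    filter_upwards [ht.eventually hev] with r hr
    have hd : HasFDerivAt v (fderiv ℝ v (p + r • w)) (p + r • w) :=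
      (hr.differentiableAt (by norm_num)).hasFDerivAt
    exact hd.comp_hasDerivAt r (hl r)
  · have hd : ContDiffAt ℝ 1 (fderiv ℝ v) p := hv.fderiv_right (by norm_num)
    have hd2 : DifferentiableAt ℝ (fun q => fderiv ℝ v q w) p :=
      (hd.differentiableAt (by norm_num)).clm_apply (differentiableAt_const w)
    have hd3 : HasFDerivAt (fun q => fderiv ℝ v q w) (fderiv ℝ (fun q => fderiv ℝ v q w) p)
      (p + (0:ℝ) • w) := by simpa using hd2.hasFDerivAt
    exact hd3.comp_hasDerivAt 0 (hl 0)

/-- at an interior local max of `v + η y²` -/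
lemma fhe_max {n : ℕ} {v : En n × ℝ → ℝ} {p : En n × ℝ} (w : En n × ℝ) {η : ℝ}
    (hv : ContDiffAt ℝ 2 v p) (hm : IsLocalMax (fun q : En n × ℝ => v q + η * q.2 ^ 2) p) :
    fderiv ℝ v p w + 2 * η * p.2 * w.2 = 0 ∧ D2 v p w + 2 * η * w.2 ^ 2 ≤ 0 := by
  obtain ⟨h1, h2⟩ := fhe_line (w := w) hv
  set f : ℝ → ℝ := fun r => v (p + r • w) + η * (p.2 + r * w.2) ^ 2 with hf
  have hcont : Tendsto (fun r : ℝ => p + r • w) (𝓝 0) (𝓝 p) := by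
    have : Continuous (fun r : ℝ => p + r • w) := by fun_prop
    simpa using this.tendsto 0
  have hmax : IsLocalMax f 0 := by
    have := hcont.eventually hm
    filter_upwards [this] with r hr
    simpa [hf] using hr
  have hq : ∀ r : ℝ, HasDerivAt (fun r : ℝ => η * (p.2 + r * w.2) ^ 2)
      (2 * η * (p.2 + r * w.2) * w.2) r := fun r => by
    have := ((((hasDerivAt_id r).mul_const w.2).const_add p.2).pow 2).const_mul η
    refine this.congr_deriv ?_
    simp
    ring
  have hq2 : HasDerivAt (fun r : ℝ => 2 * η * (p.2 + r * w.2) * w.2) (2 * η * w.2 ^ 2) 0 := by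
    have := ((((hasDerivAt_id (0:ℝ)).mul_const w.2).const_add p.2).const_mul (2 * η)).mul_const w.2
    refine this.congr_deriv ?_
    simp
    ring
  have hd : ∀ᶠ r in 𝓝 (0:ℝ), HasDerivAt f
      (fderiv ℝ v (p + r • w) w + 2 * η * (p.2 + r * w.2) * w.2) r := by
    filter_upwards [h1] with r hr
    exact hr.add (hq r)
  have hd0 := hd.self_of_nhds
  have e0 := hmax.hasDerivAt_eq_zero hd0
  have e1 : deriv f =ᶠ[𝓝 0] fun r => fderiv ℝ v (p + r • w) w + 2 * η * (p.2 + r * w.2) * w.2 := by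
    filter_upwards [hd] with r hr
    exact hr.deriv
  have e2 := e1.deriv_eq
  have e4 := (h2.add hq2).deriv
  rw [show deriv (fun r => fderiv ℝ v (p + r • w) w + 2 * η * (p.2 + r * w.2) * w.2) 0 = _ from e4] at e2
  have e3 := fhe_second hmax hd0.continuousAt
  refine ⟨by simpa using e0, by linarith⟩

lemma fhe_max_principle {n : ℕ} {a : ℝ} (ha : a ∈ Ioo (0:ℝ) 1) {v : ℝ → En n × ℝ → ℝ}
    (hv : IsFracHeatSolution a v) {t₀ : ℝ} (ht₀ : t₀ ∈ Icc (-1 : ℝ) 0)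
    (hb : ∀ (t : ℝ) (p : En n × ℝ),
        ((t = -1 ∧ p ∈ closedHalfBall n 1) ∨ (t ∈ Icc (-1 : ℝ) t₀ ∧ p ∈ closedSpherePlus n)) →
        v t p ≤ 0) :
    ∀ t ∈ Icc (-1 : ℝ) t₀, ∀ p ∈ closedHalfBall n 1, v t p ≤ 0 := by
  intro t ht p hp
  obtain ⟨hvc, hvh, hvt⟩ := hv
  suffices H : ∀ η > 0, v t p ≤ 2 * η by
    by_contra hcon
    push Not at hcon
    have := H (v t p / 4) (by linarith)
    linarith
  intro η hη
  set z : ℝ × (En n × ℝ) → ℝ := fun q => v q.1 q.2 + η * q.2.2 ^ 2 - η * q.1 with hz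
  have hzc : ContinuousOn z (Icc (-1 : ℝ) t₀ ×ˢ closedHalfBall n 1) := by
    have h1 : ContinuousOn (fun q : ℝ × (En n × ℝ) => v q.1 q.2)
      (Icc (-1 : ℝ) t₀ ×ˢ closedHalfBall n 1) :=
      hvc.mono (prod_mono (Icc_subset_Icc le_rfl ht₀.2) le_rfl)
    have h2 : Continuous (fun q : ℝ × (En n × ℝ) => η * q.2.2 ^ 2) := by fun_prop
    have h3 : Continuous (fun q : ℝ × (En n × ℝ) => η * q.1) := by fun_prop
    exact (h1.add h2.continuousOn).sub h3.continuousOn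
  obtain ⟨⟨τ, x, y⟩, ⟨hτ, hxy⟩, hmax⟩ :=
    (isCompact_Icc.prod (fhe_isCompact n)).exists_isMaxOn ⟨(t, p), ht, hp⟩ hzc
  simp only at hτ hxy
  have hxy' := hxy
  obtain ⟨hn1, hy0⟩ := hxy'
  simp only at hn1 hy0
  have hmax' : ∀ t' ∈ Icc (-1:ℝ) t₀, ∀ q ∈ closedHalfBall n 1,
      v t' q + η * q.2 ^ 2 - η * t' ≤ v τ (x, y) + η * y ^ 2 - η * τ := fun t' h1 q h2 =>
    hmax (show (t', q) ∈ _ from ⟨h1, h2⟩)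
  have hfin : v τ (x, y) ≤ 0 → v t p ≤ 2 * η := by
    intro h
    have h1 := hmax' t ht p hp
    have h2 : y ^ 2 ≤ 1 := by nlinarith [sq_nonneg ‖x‖]
    have h3 : η * y ^ 2 ≤ η * 1 := by gcongr
    have h4 : η * (-1) ≤ η * τ := by gcongr; exact hτ.1
    have h5 : η * t ≤ 0 := by nlinarith [ht.2, ht₀.2]
    have h6 : 0 ≤ η * p.2 ^ 2 := by positivity
    linarith
  by_cases hτ1 : τ = -1
  · exact hfin (hb _ _ (Or.inl ⟨hτ1, hxy⟩))
  by_cases hs1 : ‖x‖ ^ 2 + y ^ 2 = 1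
  · exact hfin (hb _ _ (Or.inr ⟨hτ, hs1, hy0⟩))
  exfalso
  have hτ' : τ ∈ Ioc (-1:ℝ) 0 := ⟨lt_of_le_of_ne hτ.1 (Ne.symm hτ1), hτ.2.trans ht₀.2⟩
  have hτI : τ ∈ Icc (-1:ℝ) 0 := ⟨hτ.1, hτ'.2⟩
  have hlt : ‖x‖ ^ 2 + y ^ 2 < 1 ^ 2 := by
    rcases hn1.lt_or_eq with h | h
    · exact h
    · exact absurd (by simpa using h) hs1
  have hsub : halfBall n 1 ⊆ closedHalfBall n 1 := fun q hq => ⟨hq.1.le, hq.2.le⟩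
  obtain ⟨hC2, hL⟩ := hvh τ hτI
  rcases hy0.lt_or_eq with hy | hy
  · -- interior
    have hmem : (x, y) ∈ halfBall n 1 := ⟨hlt, hy⟩
    have hnh := (fhe_isOpen n).mem_nhds hmem
    have hcd : ContDiffAt ℝ 2 (v τ) (x, y) := hC2.contDiffAt hnh
    have hloc : IsLocalMax (fun q : En n × ℝ => v τ q + η * q.2 ^ 2) (x, y) := by
      filter_upwards [hnh] with q hq
      have := hmax' τ hτ q (hsub hq)
      linarith
    have hA := hL _ hmem
    unfold lap at hA
    have hS : ∑ i : Fin n, D2 (v τ) (x, y) (EuclideanSpace.single i 1, 0) ≤ 0 := by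
      apply Finset.sum_nonpos
      intro i _
      simpa using (fhe_max (EuclideanSpace.single i 1, (0:ℝ)) hcd hloc).2
    obtain ⟨hB, hD⟩ := fhe_max ((0 : En n), (1:ℝ)) hcd hloc
    simp only at hB hD hA
    have hB' : fderiv ℝ (v τ) (x, y) (0, 1) = - (2 * η * y) := by linarith
    rw [hB'] at hA
    have : a / y * (-(2 * η * y)) = - (2 * a * η) := by field_simp
    rw [this] at hA
    have : 0 < a * η := mul_pos ha.1 hη
    linarith
  · -- base
    subst hy
    have hxf : x ∈ flatBall n 1 := by
      show ‖x‖ < 1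
      nlinarith [norm_nonneg x]
    obtain ⟨hdiff, hlim⟩ := hvt τ hτ' x hxf
    set L := derivWithin (fun τ => v τ (x, 0)) (Ioc (-1 : ℝ) 0) τ with hLdef
    have hder : HasDerivWithinAt (fun τ => v τ (x, 0)) L (Ioc (-1:ℝ) 0) τ :=
      hdiff.hasDerivWithinAt
    -- L ≥ η
    have hLη : η ≤ L := by
      have h1 : HasDerivWithinAt (fun τ => v τ (x, 0)) L (Ioo (-1:ℝ) τ) τ :=
        hder.mono (fun r hr => ⟨hr.1, hr.2.le.trans hτ'.2⟩)
      rw [hasDerivWithinAt_iff_tendsto_slope' (by simp)] at h1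
      have : (𝓝[Ioo (-1:ℝ) τ] τ).NeBot := by
        rw [nhdsWithin_Ioo_eq_nhdsLT hτ'.1]; infer_instance
      refine ge_of_tendsto h1 ?_
      filter_upwards [self_mem_nhdsWithin] with r hr
      have h2 := hmax' r ⟨hr.1.le, hr.2.le.trans hτ.2⟩ (x, 0) hxy
      simp only at h2
      rw [slope_comm, slope_def_field, le_div_iff₀ (by linarith [hr.2])]
      nlinarith
    have hev : ∀ᶠ y : ℝ in 𝓝[>] 0, 0 < y ^ a * fderiv ℝ (v τ) (x, y) (0, 1) :=
      hlim.eventually (lt_mem_nhds (by linarith))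
    have hev2 : ∀ᶠ y : ℝ in 𝓝[>] 0, ‖x‖ ^ 2 + y ^ 2 < 1 ^ 2 := by
      have : Continuous (fun y : ℝ => ‖x‖ ^ 2 + y ^ 2) := by fun_prop
      exact (this.tendsto 0).mono_left nhdsWithin_le_nhds |>.eventually (gt_mem_nhds hlt)
    obtain ⟨c, hc0, hc⟩ := mem_nhdsGT_iff_exists_Ioc_subset.1 (hev.and hev2)
    have hc0 : 0 < c := hc0
    have hin : ∀ y ∈ Icc 0 c, (x, y) ∈ closedHalfBall n 1 := by
      intro y hy
      rcases hy.1.lt_or_eq with h | h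
      · exact ⟨(hc ⟨h, hy.2⟩).2.le, hy.1⟩
      · rw [← h]; exact hxy
    have hcontf : ContinuousOn (fun y : ℝ => v τ (x, y)) (Icc 0 c) := by
      have : ContinuousOn (fun y : ℝ => (τ, (x, y))) (Icc 0 c) := by fun_prop
      exact hvc.comp this (fun y hy => ⟨hτI, hin y hy⟩)
    have hderf : ∀ y ∈ Ioo 0 c, HasDerivAt (fun y : ℝ => v τ (x, y))
        (fderiv ℝ (v τ) (x, y) (0, 1)) y := by
      intro y hy
      have hmem : (x, y) ∈ halfBall n 1 := ⟨(hc ⟨hy.1, hy.2.le⟩).2, hy.1⟩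
      have hcd : ContDiffAt ℝ 2 (v τ) (x, y) := hC2.contDiffAt ((fhe_isOpen n).mem_nhds hmem)
      have hd := (hcd.differentiableAt (by norm_num)).hasFDerivAt
      exact hd.comp_hasDerivAt y ((hasDerivAt_const y x).prodMk (hasDerivAt_id y))
    obtain ⟨ξ, hξ, hξe⟩ := exists_hasDerivAt_eq_slope _ _ hc0 hcontf hderf
    have hpos : 0 < fderiv ℝ (v τ) (x, ξ) (0, 1) := by
      have := (hc ⟨hξ.1, hξ.2.le⟩).1
      exact pos_of_mul_pos_right this (Real.rpow_nonneg hξ.1.le a)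
    rw [hξe] at hpos
    have h7 : 0 < v τ (x, c) - v τ (x, 0) := by
      by_contra h
      push Not at h
      have := div_nonpos_of_nonpos_of_nonneg h (by linarith : (0:ℝ) ≤ c - 0)
      linarith
    have h8 := hmax' τ hτ (x, c) (hin c ⟨hc0.le, le_rfl⟩)
    simp only at h8
    have h9 : 0 < η * c ^ 2 := by positivity
    linarith

/-- explicit solution -/
def fheH {n : ℕ} (s : ℝ) (x₀ : En n) (k0 k1 k2 : ℝ) (p : En n × ℝ) : ℝ :=
  k0 + k1 * ⟪x₀, p.1⟫ + k2 * (p.2 ^ (2 * s) / (2 * s))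

lemma fheH_fderiv {n : ℕ} {s : ℝ} (hs : 0 < s) (x₀ : En n) (k0 k1 k2 : ℝ) (p : En n × ℝ)
    (hp : 0 < p.2) (w : En n × ℝ) :
    fderiv ℝ (fheH s x₀ k0 k1 k2) p w = k1 * ⟪x₀, w.1⟫ + k2 * p.2 ^ (2 * s - 1) * w.2 := by
  have h1 : HasFDerivAt (fun p : En n × ℝ => ⟪x₀, p.1⟫)
      ((innerSL ℝ x₀).comp (ContinuousLinearMap.fst ℝ (En n) ℝ)) p :=
    ((innerSL ℝ x₀).comp (ContinuousLinearMap.fst ℝ (En n) ℝ)).hasFDerivAt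
  have h2 : HasFDerivAt (fun p : En n × ℝ => p.2 ^ (2 * s))
      ((2 * s * p.2 ^ (2 * s - 1)) • ContinuousLinearMap.snd ℝ (En n) ℝ) p :=
    (Real.hasDerivAt_rpow_const (Or.inl hp.ne')).comp_hasFDerivAt p
      (ContinuousLinearMap.snd ℝ (En n) ℝ).hasFDerivAt
  have h3 : HasFDerivAt (fheH s x₀ k0 k1 k2) _ p :=
    ((h1.const_mul k1).const_add k0).add ((h2.mul_const (2 * s)⁻¹).const_mul k2)
  rw [h3.fderiv]
  simp
  field_simp

lemma fheH_contDiffAt {n : ℕ} {s : ℝ} (x₀ : En n) (k0 k1 k2 : ℝ) (p : En n × ℝ)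
    (hp : 0 < p.2) : ContDiffAt ℝ 2 (fheH s x₀ k0 k1 k2) p := by
  unfold fheH
  have h2 : ContDiffAt ℝ 2 (fun p : En n × ℝ => p.2 ^ (2 * s)) p :=
    contDiffAt_snd.rpow_const_of_ne hp.ne'
  have h1 : ContDiffAt ℝ 2 (fun p : En n × ℝ => ⟪x₀, p.1⟫) p :=
    contDiffAt_const.inner ℝ contDiffAt_fst
  exact (contDiffAt_const.add (contDiffAt_const.mul h1)).add
    (contDiffAt_const.mul (h2.div_const _))

lemma fheH_D2 {n : ℕ} {s : ℝ} (hs : 0 < s) (x₀ : En n) (k0 k1 k2 : ℝ) (p : En n × ℝ)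
    (hp : 0 < p.2) (w : En n × ℝ) :
    D2 (fheH s x₀ k0 k1 k2) p w = k2 * ((2 * s - 1) * p.2 ^ (2 * s - 1 - 1)) * w.2 ^ 2 := by
  unfold D2
  have hev : (fun q => fderiv ℝ (fheH s x₀ k0 k1 k2) q w) =ᶠ[𝓝 p]
      fun q => k1 * ⟪x₀, w.1⟫ + k2 * q.2 ^ (2 * s - 1) * w.2 := by
    have : ∀ᶠ q : En n × ℝ in 𝓝 p, 0 < q.2 := continuous_snd.continuousAt.eventually (lt_mem_nhds hp)
    filter_upwards [this] with q hq
    exact fheH_fderiv hs x₀ k0 k1 k2 q hq w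
  rw [hev.fderiv_eq]
  have h2 : HasFDerivAt (fun p : En n × ℝ => p.2 ^ (2 * s - 1))
      (((2 * s - 1) * p.2 ^ (2 * s - 1 - 1)) • ContinuousLinearMap.snd ℝ (En n) ℝ) p :=
    (Real.hasDerivAt_rpow_const (Or.inl hp.ne')).comp_hasFDerivAt p
      (ContinuousLinearMap.snd ℝ (En n) ℝ).hasFDerivAt
  have h3 := ((h2.const_mul k2).mul_const w.2).const_add (k1 * ⟪x₀, w.1⟫)
  rw [h3.fderiv]
  simp
  ring

lemma fhe_D2_add {n : ℕ} {f g : En n × ℝ → ℝ} {p : En n × ℝ} (c : ℝ) (w : En n × ℝ)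
    (hf : ContDiffAt ℝ 2 f p) (hg : ContDiffAt ℝ 2 g p) :
    D2 (fun q => c * f q + g q) p w = c * D2 f p w + D2 g p w ∧
    fderiv ℝ (fun q => c * f q + g q) p w = c * fderiv ℝ f p w + fderiv ℝ g p w := by
  have key : ∀ q, ContDiffAt ℝ 2 f q → ContDiffAt ℝ 2 g q →
      fderiv ℝ (fun q => c * f q + g q) q w = c * fderiv ℝ f q w + fderiv ℝ g q w := by
    intro q h1 h2
    have := ((h1.differentiableAt (by norm_num)).hasFDerivAt.const_mul c).add
      (h2.differentiableAt (by norm_num)).hasFDerivAt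
    rw [HasFDerivAt.fderiv (f := fun q => c * f q + g q) this]
    simp
  refine ⟨?_, key p hf hg⟩
  have hev : (fun q => fderiv ℝ (fun q => c * f q + g q) q w) =ᶠ[𝓝 p]
      fun q => c * fderiv ℝ f q w + fderiv ℝ g q w := by
    filter_upwards [hf.eventually (by simp), hg.eventually (by simp)] with q h1 h2
    exact key q h1 h2
  have hd : ∀ f : En n × ℝ → ℝ, ContDiffAt ℝ 2 f p →
      DifferentiableAt ℝ (fun q => fderiv ℝ f q w) p := fun f hf =>
    (ContDiffAt.differentiableAt (n := 1) (hf.fderiv_right (by norm_num)) (by norm_num)).clm_apply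
      (differentiableAt_const w)
  unfold D2
  rw [hev.fderiv_eq]
  have := ((hd f hf).hasFDerivAt.const_mul c).add (hd g hg).hasFDerivAt
  rw [HasFDerivAt.fderiv (f := fun q => c * fderiv ℝ f q w + fderiv ℝ g q w) this]
  simp

lemma fhe_lin {n : ℕ} {s : ℝ} (hs : s ∈ Ioo (0:ℝ) (1/2)) {u : ℝ → En n × ℝ → ℝ}
    (hu : IsFracHeatSolution (1 - 2 * s) u) (x₀ : En n) (c k0 k1 k2 : ℝ) :
    IsFracHeatSolution (1 - 2 * s)
      (fun t p => c * u t p + fheH s x₀ (k0 + k2 * t) k1 k2 p) := by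
  obtain ⟨hc, hh, hb⟩ := hu
  have hs0 := hs.1
  refine ⟨?_, ?_, ?_⟩
  · have h1 : Continuous (fun q : ℝ × (En n × ℝ) => q.2.2 ^ (2 * s)) :=
      (by fun_prop : Continuous (fun q : ℝ × (En n × ℝ) => q.2.2)).rpow_const
        (fun _ => Or.inr (by linarith))
    have h2 : Continuous (fun q : ℝ × (En n × ℝ) => fheH s x₀ (k0 + k2 * q.1) k1 k2 q.2) := by
      unfold fheH
      fun_prop
    exact (continuousOn_const.mul hc).add h2.continuousOn
  · intro t ht
    obtain ⟨h1, h2⟩ := hh t ht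
    constructor
    · intro p hp
      exact ((contDiffAt_const.mul (h1.contDiffAt ((fhe_isOpen n).mem_nhds hp))).add
        (fheH_contDiffAt x₀ _ k1 k2 p hp.2)).contDiffWithinAt
    · intro p hp
      have hp0 := hp.2
      have hf := h1.contDiffAt ((fhe_isOpen n).mem_nhds hp)
      have hg := fheH_contDiffAt (s := s) x₀ (k0 + k2 * t) k1 k2 p hp.2
      have he := h2 p hp
      unfold lap at he ⊢
      simp only [(fhe_D2_add c _ hf hg).1, (fhe_D2_add c _ hf hg).2, fheH_D2 hs0 x₀ _ k1 k2 p hp0,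
        fheH_fderiv hs0 x₀ _ k1 k2 p hp0, Finset.sum_add_distrib, ← Finset.mul_sum]
      rw [Real.rpow_sub_one hp0.ne' (2 * s - 1)]
      simp
      have e : k2 * ((2 * s - 1) * (p.2 ^ (2 * s - 1) / p.2)) +
        (1 - 2 * s) / p.2 * (k2 * p.2 ^ (2 * s - 1)) = 0 := by
        field_simp
        ring
      linear_combination c * he + e
  · intro t ht x hx
    obtain ⟨h1, h2⟩ := hb t ht x hx
    have hder : HasDerivWithinAt (fun τ => c * u τ (x, 0) + fheH s x₀ (k0 + k2 * τ) k1 k2 (x, 0))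
        (c * derivWithin (fun τ => u τ (x, 0)) (Ioc (-1 : ℝ) 0) t + k2) (Ioc (-1 : ℝ) 0) t := by
      refine (h1.hasDerivWithinAt.const_mul c).add ?_
      unfold fheH
      have := ((((hasDerivWithinAt_id t (Ioc (-1 : ℝ) 0)).const_mul k2).const_add k0).add_const
        (k1 * ⟪x₀, x⟫)).add_const (k2 * ((0:ℝ) ^ (2 * s) / (2 * s)))
      simpa using this
    refine ⟨hder.differentiableWithinAt, ?_⟩
    rw [hder.derivWithin ((uniqueDiffOn_Ioc (-1:ℝ) 0) t ht)]
    unfold NormalDerivLimit at h2 ⊢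
    refine ((h2.const_mul c).add_const k2).congr' ?_
    have hx' : ‖x‖ < 1 := hx
    have hev2 : ∀ᶠ y : ℝ in 𝓝[>] 0, ‖x‖ ^ 2 + y ^ 2 < 1 ^ 2 := by
      have : Continuous (fun y : ℝ => ‖x‖ ^ 2 + y ^ 2) := by fun_prop
      refine (this.tendsto 0).mono_left nhdsWithin_le_nhds |>.eventually (gt_mem_nhds ?_)
      nlinarith [norm_nonneg x]
    filter_upwards [hev2, self_mem_nhdsWithin] with y hy hy0
    have hy0 : 0 < y := hy0
    have hmem : (x, y) ∈ halfBall n 1 := ⟨hy, hy0⟩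
    have hf := (hh t ⟨ht.1.le, ht.2⟩).1.contDiffAt ((fhe_isOpen n).mem_nhds hmem)
    have hg := fheH_contDiffAt (s := s) x₀ (k0 + k2 * t) k1 k2 (x, y) hy0
    rw [(fhe_D2_add c _ hf hg).2, fheH_fderiv hs0 x₀ _ k1 k2 (x, y) hy0]
    have e : y ^ (1 - 2 * s) * y ^ (2 * s - 1) = 1 := by
      rw [← Real.rpow_add hy0]; simp
    simp only [inner_zero_right]
    linear_combination (-k2) * e

/-- **Lemma 4.4 (continuity on the lateral boundary `∂B_1^0 × (-1,0)`).** If a solution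
of the localized fractional heat equation separates from its value at
`(t₀, x₀, 0)`, `|x₀| = 1`, at most like `C₀ (|x-x₀|² + y^{1-a} + (t₀-t))^α` on the
parabolic boundary, then it separates at most like
`C C₀ (|x-x₀|² + y^{1-a} + (t₀-t))^{sα/2}` everywhere (here `a = 1-2s`, `1-a = 2s`). -/
theorem fhe_regularity_lateral_boundary (n : ℕ) (hn : 1 ≤ n) (s : ℝ)
    (hs : s ∈ Ioo (0 : ℝ) (1/2)) (α : ℝ) (hα : α ∈ Ioc (0 : ℝ) 1) :
    ∃ C > 0, ∀ (u : ℝ → En n × ℝ → ℝ) (x₀ : En n) (t₀ : ℝ) (C₀ : ℝ),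
      IsFracHeatSolution (1 - 2*s) u →
      ‖x₀‖ = 1 → t₀ ∈ Icc (-1 : ℝ) 0 → 0 ≤ C₀ →
      (∀ (t : ℝ) (p : En n × ℝ),
        ((t = -1 ∧ p ∈ closedHalfBall n 1) ∨ (t ∈ Icc (-1 : ℝ) t₀ ∧ p ∈ closedSpherePlus n)) →
        |u t p - u t₀ (x₀, 0)| ≤ C₀ * (‖p.1 - x₀‖^2 + p.2 ^ (2*s) + (t₀ - t)) ^ α) →
      ∀ t ∈ Icc (-1 : ℝ) t₀, ∀ p ∈ closedHalfBall n 1,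
        |u t p - u t₀ (x₀, 0)| ≤
          C * C₀ * (‖p.1 - x₀‖^2 + p.2 ^ (2*s) + (t₀ - t)) ^ (s * α / 2) := by
  obtain ⟨hs0, hs1⟩ := hs
  obtain ⟨hα0, hα1⟩ := hα
  set B : ℝ := 5 + 1 / (2 * s) with hB
  have hBpos : 0 < B := by positivity
  refine ⟨2 * B + 7, by positivity, ?_⟩
  intro u x₀ t₀ C₀ hu hx₀ ht₀ hC₀ hb t ht p hp
  set D : ℝ → En n × ℝ → ℝ := fun t p => ‖p.1 - x₀‖^2 + p.2 ^ (2*s) + (t₀ - t) with hD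
  set M : En n × ℝ → ℝ := fun p => 2 * (1 - ⟪x₀, p.1⟫) with hM
  have hexp : ∀ q : En n × ℝ, ‖q.1 - x₀‖ ^ 2 = ‖q.1‖ ^ 2 - 2 * ⟪x₀, q.1⟫ + 1 := by
    intro q
    rw [norm_sub_sq_real, hx₀, real_inner_comm]; norm_num
  have hM1 : ∀ q ∈ closedHalfBall n 1, ‖q.1 - x₀‖ ^ 2 ≤ M q := by
    intro q hq
    have h1 := hq.1
    have := hexp q
    simp only [hM]
    nlinarith [sq_nonneg q.2]
  have hM2 : ∀ q ∈ closedHalfBall n 1, q.2 ^ 2 ≤ M q := by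
    intro q hq
    have h1 := hq.1
    have := hexp q
    simp only [hM]
    nlinarith [sq_nonneg ‖q.1 - x₀‖]
  have hM3 : ∀ q : En n × ℝ, M q ≤ 2 * ‖q.1 - x₀‖ := by
    intro q
    have h1 : ⟪x₀, x₀ - q.1⟫ ≤ ‖x₀‖ * ‖x₀ - q.1‖ := real_inner_le_norm _ _
    rw [inner_sub_right, real_inner_self_eq_norm_sq, hx₀, norm_sub_rev] at h1
    simp only [hM]
    linarith
  have hn2 : ∀ q ∈ closedHalfBall n 1, ‖q.1 - x₀‖ ≤ 2 := by
    intro q hq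
    have h1 := hq.1
    have h2 := norm_sub_le q.1 x₀
    have h3 : ‖q.1‖ ≤ 1 := by nlinarith [sq_nonneg q.2, norm_nonneg q.1]
    linarith
  have hM0 : ∀ q ∈ closedHalfBall n 1, 0 ≤ M q := fun q hq => (sq_nonneg _).trans (hM2 q hq)
  have hM4 : ∀ q ∈ closedHalfBall n 1, M q ≤ 4 * M q ^ s := by
    intro q hq
    have h0 := hM0 q hq
    have h4 : M q ≤ 4 := by linarith [hM3 q, hn2 q hq]
    rcases h0.eq_or_lt with h | h
    · rw [← h]; positivity
    have e : M q = M q ^ (1 - s) * M q ^ s := by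
      rw [← Real.rpow_add h]; simp
    have h5 : M q ^ (1 - s) ≤ 4 := by
      calc M q ^ (1 - s) ≤ 4 ^ (1 - s) := Real.rpow_le_rpow h0 h4 (by linarith)
        _ ≤ 4 ^ (1:ℝ) := Real.rpow_le_rpow_of_exponent_le (by norm_num) (by linarith)
        _ = 4 := by norm_num
    have h6 : 0 ≤ M q ^ s := Real.rpow_nonneg h0 s
    nlinarith
  have hy1 : ∀ q ∈ closedHalfBall n 1, q.2 ^ (2 * s) ≤ M q ^ s := by
    intro q hq
    rw [Real.rpow_mul hq.2]
    exact Real.rpow_le_rpow (by have := hq.2; positivity)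
      (by simpa using hM2 q hq) hs0.le
  have hDH : ∀ t, ∀ q ∈ closedHalfBall n 1,
      D t q ≤ B * M q ^ s - q.2 ^ (2 * s) / (2 * s) + (t₀ - t) := by
    intro t q hq
    have h1 := hM1 q hq
    have h2 := hM4 q hq
    have h3 := hy1 q hq
    have h4 : q.2 ^ (2 * s) / (2 * s) ≤ M q ^ s / (2 * s) := by gcongr
    have h5 : B * M q ^ s = 5 * M q ^ s + M q ^ s / (2 * s) := by rw [hB]; ring
    simp only [hD]
    linarith
  have hDnn : ∀ t ≤ t₀, ∀ q ∈ closedHalfBall n 1, 0 ≤ D t q := by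
    intro t ht q hq
    have := Real.rpow_nonneg hq.2 (2 * s)
    have : 0 ≤ t₀ - t := by linarith
    simp only [hD]
    positivity
  have hmain : ∀ σ : ℝ, |σ| = 1 → ∀ ε > 0, ∀ δ > 0,
      σ * (u t p - u t₀ (x₀, 0)) ≤ C₀ * (ε ^ α + α * ε ^ (α - 1) *
        (B * (δ ^ s + s * δ ^ (s - 1) * M p) - p.2 ^ (2 * s) / (2 * s) + (t₀ - t))) := by
    intro σ hσ ε hε δ hδ
    set A := α * ε ^ (α - 1) with hA
    have hApos : 0 < A := by positivity
    have hsol := fhe_lin ⟨hs0, hs1⟩ hu x₀ σ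
      (-σ * u t₀ (x₀, 0) - C₀ * (ε ^ α + A * (B * (δ ^ s + s * δ ^ (s - 1) * 2) + t₀)))
      (C₀ * A * B * s * δ ^ (s - 1) * 2) (C₀ * A)
    have heq : ∀ t p, σ * u t p + fheH s x₀
        (-σ * u t₀ (x₀, 0) - C₀ * (ε ^ α + A * (B * (δ ^ s + s * δ ^ (s - 1) * 2) + t₀)) +
          C₀ * A * t)
        (C₀ * A * B * s * δ ^ (s - 1) * 2) (C₀ * A) p =
        σ * (u t p - u t₀ (x₀, 0)) - C₀ * (ε ^ α + A *
          (B * (δ ^ s + s * δ ^ (s - 1) * M p) - p.2 ^ (2 * s) / (2 * s) + (t₀ - t))) := by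
      intro t p
      simp only [fheH, hM]
      ring
    have := fhe_max_principle (a := 1 - 2 * s) ⟨by linarith, by linarith⟩ hsol ht₀ ?_ t ht p hp
    · simp only [heq] at this
      linarith
    · intro t p htp
      have hp' : p ∈ closedHalfBall n 1 := by
        rcases htp with h | h
        · exact h.2
        · exact ⟨by simpa using h.2.1.le, h.2.2⟩
      have htt : t ≤ t₀ := by
        rcases htp with h | h
        · rw [h.1]; exact ht₀.1
        · exact h.1.2
      rw [heq]
      have h1 : σ * (u t p - u t₀ (x₀, 0)) ≤ |u t p - u t₀ (x₀, 0)| := by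
        calc _ ≤ |σ * (u t p - u t₀ (x₀, 0))| := le_abs_self _
          _ = _ := by rw [abs_mul, hσ, one_mul]
      have h2 := hb t p htp
      have h3 : D t p ^ α ≤ ε ^ α + A * D t p := fhe_tangent (hDnn t htt p hp') hε hα0 hα1
      have h4 : M p ^ s ≤ δ ^ s + s * δ ^ (s - 1) * M p :=
        fhe_tangent (hM0 p hp') hδ hs0 (by linarith)
      have h5 := hDH t p hp'
      have h6 : D t p ≤ B * (δ ^ s + s * δ ^ (s - 1) * M p) - p.2 ^ (2 * s) / (2 * s)
          + (t₀ - t) := by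
        have := mul_le_mul_of_nonneg_left h4 hBpos.le
        linarith
      have h7 : C₀ * D t p ^ α ≤ C₀ * (ε ^ α + A *
          (B * (δ ^ s + s * δ ^ (s - 1) * M p) - p.2 ^ (2 * s) / (2 * s) + (t₀ - t))) := by
        apply mul_le_mul_of_nonneg_left _ hC₀
        have := mul_le_mul_of_nonneg_left h6 hApos.le
        linarith
      have h8 : |u t p - u t₀ (x₀, 0)| ≤ C₀ * D t p ^ α := h2
      linarith
  change _ ≤ (2 * B + 7) * C₀ * (D t p) ^ (s * α / 2)
  have hyn := Real.rpow_nonneg hp.2 (2 * s)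
  have htn : 0 ≤ t₀ - t := by linarith [ht.2]
  rcases (hDnn t ht.2 p hp).eq_or_lt with h0 | hpos
  · have h0' : ‖p.1 - x₀‖^2 + p.2 ^ (2*s) + (t₀ - t) = 0 := h0.symm
    have e1 : ‖p.1 - x₀‖ ^ 2 = 0 := by nlinarith [sq_nonneg ‖p.1 - x₀‖]
    have e2 : p.2 ^ (2 * s) = 0 := by nlinarith [sq_nonneg ‖p.1 - x₀‖]
    have e3 : t = t₀ := by nlinarith [sq_nonneg ‖p.1 - x₀‖]
    have e4 : p.1 = x₀ := by
      have : ‖p.1 - x₀‖ = 0 := by simpa using e1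
      exact sub_eq_zero.1 (norm_eq_zero.1 this)
    have e5 : p.2 = 0 := (Real.rpow_eq_zero hp.2 (by linarith)).1 e2
    have e6 : p = (x₀, 0) := Prod.ext e4 e5
    rw [e3, e6]
    simp only [sub_self, abs_zero]
    have : 0 ≤ D t₀ (x₀, 0) := hDnn t₀ le_rfl _ (e6 ▸ hp)
    positivity
  · set d := D t p with hd
    have hdd : d = ‖p.1 - x₀‖^2 + p.2 ^ (2*s) + (t₀ - t) := rfl
    have hd6 : d ≤ 6 := by
      have h1 := hn2 p hp
      have h2 : p.2 ≤ 1 := by nlinarith [hp.1, sq_nonneg ‖p.1‖]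
      have h3 : p.2 ^ (2 * s) ≤ 1 := Real.rpow_le_one hp.2 h2 (by linarith)
      have h4 := ht.1
      have h5 := ht₀.2
      nlinarith [norm_nonneg (p.1 - x₀)]
    set ε := d ^ (s / 2) with hε
    set δ := d ^ (1 / 2 : ℝ) with hδ
    have hεp : 0 < ε := Real.rpow_pos_of_pos hpos _
    have hδp : 0 < δ := Real.rpow_pos_of_pos hpos _
    have hδs : δ ^ s = ε := by
      rw [hδ, ← Real.rpow_mul hpos.le, hε]; congr 1; ring
    have hεα : ε ^ α = d ^ (s * α / 2) := by
      rw [hε, ← Real.rpow_mul hpos.le]; congr 1; ring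
    have hMδ : M p ≤ 2 * δ := by
      have h1 : ‖p.1 - x₀‖ ≤ δ := by
        rw [hδ, ← Real.sqrt_eq_rpow]
        apply Real.le_sqrt_of_sq_le
        linarith
      linarith [hM3 p]
    have hdε : d ≤ 6 * ε := by
      have e : d = d ^ (1 - s / 2) * ε := by
        rw [hε, ← Real.rpow_add hpos]; simp
      have h5 : d ^ (1 - s / 2) ≤ 6 := by
        calc d ^ (1 - s / 2) ≤ 6 ^ (1 - s / 2) := Real.rpow_le_rpow hpos.le hd6 (by linarith)
          _ ≤ 6 ^ (1:ℝ) := Real.rpow_le_rpow_of_exponent_le (by norm_num) (by linarith)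
          _ = 6 := by norm_num
      calc d = d ^ (1 - s / 2) * ε := e
        _ ≤ 6 * ε := by gcongr
    have hδ1 : δ ^ s + s * δ ^ (s - 1) * M p ≤ 2 * ε := by
      have h1 : s * δ ^ (s - 1) * M p ≤ s * δ ^ (s - 1) * (2 * δ) := by gcongr
      have h2 : s * δ ^ (s - 1) * (2 * δ) = 2 * s * ε := by
        rw [Real.rpow_sub_one hδp.ne', hδs]; field_simp
      have h3 : 2 * s * ε ≤ 1 * ε := by gcongr; linarith
      rw [hδs] at *
      linarith
    have hbig : B * (δ ^ s + s * δ ^ (s - 1) * M p) - p.2 ^ (2 * s) / (2 * s) + (t₀ - t)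
        ≤ (2 * B + 6) * ε := by
      have h1 := mul_le_mul_of_nonneg_left hδ1 hBpos.le
      have h2 : 0 ≤ p.2 ^ (2 * s) / (2 * s) := by positivity
      have h3 : t₀ - t ≤ d := by nlinarith [sq_nonneg ‖p.1 - x₀‖]
      linarith
    have hR : C₀ * (ε ^ α + α * ε ^ (α - 1) *
        (B * (δ ^ s + s * δ ^ (s - 1) * M p) - p.2 ^ (2 * s) / (2 * s) + (t₀ - t)))
        ≤ (2 * B + 7) * C₀ * d ^ (s * α / 2) := by
      rw [← hεα]
      have h1 : α * ε ^ (α - 1) *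
        (B * (δ ^ s + s * δ ^ (s - 1) * M p) - p.2 ^ (2 * s) / (2 * s) + (t₀ - t)) ≤
        α * ε ^ (α - 1) * ((2 * B + 6) * ε) := by gcongr
      have h2 : α * ε ^ (α - 1) * ((2 * B + 6) * ε) = α * ((2 * B + 6) * ε ^ α) := by
        rw [Real.rpow_sub_one hεp.ne']; field_simp
      have h3 : α * ((2 * B + 6) * ε ^ α) ≤ 1 * ((2 * B + 6) * ε ^ α) := by gcongr
      calc _ ≤ C₀ * (ε ^ α + 1 * ((2 * B + 6) * ε ^ α)) := by
            apply mul_le_mul_of_nonneg_left _ hC₀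
            linarith
        _ = _ := by ring
    have hp1 := hmain 1 (by simp) ε hεp δ hδp
    have hm1 := hmain (-1) (by simp) ε hεp δ hδp
    rw [abs_le]
    constructor <;> linarith

end
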